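/- arXiv:1201.2715 — 2 statements merged into one kernel-verified Lean document; each statement's English description precedes it below -/
import Mathlib

section
/- Fix a sequence of matchings and a non-negative integer load vector at the end of round t₁, and run the token process. For any subset 𝓑 of the tokens, any subset of nodes D ⊆ V, and any round t₂ > t₁, it holds that P( ⋀_{i∈𝓑} (w_i^{(t₂)} ∈ D) ) ≤ ∏_{i∈𝓑} M^{[t₁+1,t₂]}_{w_i^{(t₁)}, D} = ∏_{i∈𝓑} P( w_i^{(t₂)} ∈ D ). -/
namespace LB


/-- A matching on the vertex set `Fin n`, encoded as an involution;
`f u = u` means that `u` is unmatched, and `f u = v ≠ u` means `{u,v}`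
is an edge of the matching. -/
structure Matching (n : ℕ) where
  f : Fin n → Fin n
  invol : ∀ u, f (f u) = u

/-- The matching matrix of a matching: entries `1/2` at `(u,u)`, `(u,v)`, `(v,u)`, `(v,v)`
for matched pairs `{u,v}`, entry `1` at `(w,w)` for unmatched `w`, and `0` otherwise. -/
noncomputable def Matching.matrix {n : ℕ} (m : Matching n) : Matrix (Fin n) (Fin n) ℝ :=
  Matrix.of fun u v =>
    if m.f u = u then (if v = u then 1 else 0)
    else if v = u ∨ v = m.f u then (1 : ℝ) / 2 else 0

/-- `M^{[t₁,t₂]} = M^{(t₁)} * ⋯ * M^{(t₂)}` (the identity matrix if `t₁ > t₂`). -/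
noncomputable def prodMatrix {n : ℕ} (M : ℕ → Matching n) (t₁ t₂ : ℕ) : Matrix (Fin n) (Fin n) ℝ :=
  ((List.range' t₁ (t₂ + 1 - t₁)).map fun s => (M s).matrix).prod

/-- Sum of `g u v` over the matched pairs `[u:v]` (i.e. `{u,v}` in the matching with `u < v`). -/
noncomputable def pairSum {n : ℕ} (m : Matching n) (g : Fin n → Fin n → ℝ) : ℝ :=
  ∑ u : Fin n, if u < m.f u then g u (m.f u) else 0

/-- The discrepancy `max_{u,v} |x_u - x_v|` of a load vector. -/
noncomputable def disc {n : ℕ} (x : Fin n → ℝ) : ℝ :=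
  ⨆ u : Fin n, ⨆ v : Fin n, |x u - x v|

/-- Discrepancy of an integer load vector. -/
noncomputable def discZ {n : ℕ} (x : Fin n → ℤ) : ℝ := disc fun u => (x u : ℝ)

/-- The time interval `[t₁,t₂]` (with its matchings) is `(K,ε)`-smoothing. -/
def IsSmoothing {n : ℕ} (M : ℕ → Matching n) (t₁ t₂ : ℕ) (K ε : ℝ) : Prop :=
  ∀ ξ : Fin n → ℝ, disc ξ ≤ K → disc (Matrix.vecMul ξ (prodMatrix M (t₁ + 1) t₂)) ≤ ε

/-- `τ_cont(K,ε)`: the minimum `t` such that `[0,t]` is `(K,ε)`-smoothing. -/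
noncomputable def tauCont {n : ℕ} (M : ℕ → Matching n) (K ε : ℝ) : ℕ :=
  sInf {t : ℕ | IsSmoothing M 0 t K ε}

/-- One round of the discrete process: two matched nodes split their total load,
the node indicated by the orientation bit (stored at the pair `(min,max)`) receiving
the excess token; `φ u v = true` for `u < v` means the excess token goes to `u`. -/
def step {n : ℕ} (m : Matching n) (φ : Fin n → Fin n → Bool) (x : Fin n → ℤ) :
    Fin n → ℤ := fun u =>
  if m.f u = u then x u
  else if u < m.f u then
    (if φ u (m.f u) then Int.ediv (x u + x (m.f u) + 1) 2
     else Int.ediv (x u + x (m.f u)) 2)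
  else
    (if φ (m.f u) u then Int.ediv (x u + x (m.f u)) 2
     else Int.ediv (x u + x (m.f u) + 1) 2)

/-- The discrete process started at round `t₁` from load vector `x`:
`loadsFrom M t₁ Φ x r` is the load vector `r` rounds later; the `(r+1)`-st
step uses the matching `M (t₁+r+1)` and the orientations `Φ (r+1)`. -/
def loadsFrom {n : ℕ} (M : ℕ → Matching n) (t₁ : ℕ) (Φ : ℕ → Fin n → Fin n → Bool)
    (x : Fin n → ℤ) : ℕ → Fin n → ℤ
  | 0 => x
  | r + 1 => step (M (t₁ + r + 1)) (Φ (r + 1)) (loadsFrom M t₁ Φ x r)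

/-- The discrete process started at round `0`; round `t ≥ 1` uses matching `M t`. -/
def loads {n : ℕ} (M : ℕ → Matching n) (Φ : ℕ → Fin n → Fin n → Bool)
    (x : Fin n → ℤ) : ℕ → Fin n → ℤ := loadsFrom M 0 Φ x

/-- Extend a finite family of random choices (one for each of the rounds `1,…,T`)
to all rounds: round `s` reads index `s-1`. -/
def lift {A : Type*} (a₀ : A) {T : ℕ} (ω : Fin T → A) : ℕ → A := fun s =>
  if h : s - 1 < T then ω ⟨s - 1, h⟩ else a₀

/-- Default (irrelevant) orientation. -/
def orientDefault (n : ℕ) : Fin n → Fin n → Bool := fun _ _ => true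

/-- Probability of an event under the uniform distribution on a finite sample space;
this makes all the per-round random choices independent and uniform. -/
noncomputable def pr {Ω : Type*} [Fintype Ω] (A : Ω → Prop) : ℝ :=
  haveI := Classical.decPred A
  ((Finset.univ.filter A).card : ℝ) / (Fintype.card Ω : ℝ)

/-- Expectation under the uniform distribution on a finite sample space. -/
noncomputable def ex {Ω : Type*} [Fintype Ω] (Z : Ω → ℝ) : ℝ :=
  (∑ ω : Ω, Z ω) / (Fintype.card Ω : ℝ)

/-- `λ(M) = max{|λ₂(M)|, |λ_n(M)|}` for a symmetric doubly stochastic matrix `M`,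
characterized as the operator norm of `M` on the subspace orthogonal to `𝟙`. -/
noncomputable def lamMax {n : ℕ} (M : Matrix (Fin n) (Fin n) ℝ) : ℝ :=
  ⨆ x : {x : Fin n → ℝ // (∑ u, x u) = 0 ∧ (∑ u, (x u) ^ 2) = 1},
    Real.sqrt (∑ u, (M.mulVec x.1 u) ^ 2)

/-- The round matrix `M = M^{(1)} ⋯ M^{(d)}` of the balancing circuit. -/
noncomputable def roundMatrix {n d : ℕ} (Ms : Fin d → Matching n) : Matrix (Fin n) (Fin n) ℝ :=
  (List.ofFn fun i => (Ms i).matrix).prod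

/-- The periodic sequence of matchings of the balancing circuit:
round `t` uses `M^{(((t-1) mod d)+1)}`. -/
def circuit {n d : ℕ} (hd : 0 < d) (Ms : Fin d → Matching n) : ℕ → Matching n :=
  fun t => Ms ⟨(t - 1) % d, Nat.mod_lt _ hd⟩


/-- One round of the token process.  For each matched pair `{u,v}` (with `u < v`),
all tokens currently at `u` or `v` are pooled; node `u` receives the `k` tokens of
smallest `π`-rank from the pool, where `k = ⌈pool/2⌉` if the orientation bit
`φ u v` is `true` and `k = ⌊pool/2⌋` otherwise, and `v` receives the rest.
A single uniformly random permutation `π` of all tokens induces an independent,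
uniformly random draw (without replacement) inside each pool. -/
def tokenStep {n N : ℕ} (m : Matching n) (φ : Fin n → Fin n → Bool)
    (π : Equiv.Perm (Fin N)) (w : Fin N → Fin n) : Fin N → Fin n := fun i =>
  if m.f (w i) = w i then w i
  else
    let u : Fin n := if w i < m.f (w i) then w i else m.f (w i)
    let v : Fin n := if w i < m.f (w i) then m.f (w i) else w i
    let P : Finset (Fin N) := Finset.univ.filter fun j => w j = u ∨ w j = v
    let k : ℕ := if φ u v then (P.card + 1) / 2 else P.card / 2
    if (P.filter fun j => π j < π i).card < k then u else v

/-- The token process started at round `t₁` from the placement `w` of the tokens: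
`tokensFrom M t₁ R w r i` is the node hosting token `i` after `r` further rounds;
the `(r+1)`-st step uses the matching `M (t₁+r+1)` and the random choices `R (r+1)`
(an orientation bit for every pair together with a random permutation of the tokens). -/
def tokensFrom {n N : ℕ} (M : ℕ → Matching n) (t₁ : ℕ)
    (R : ℕ → (Fin n → Fin n → Bool) × Equiv.Perm (Fin N)) (w : Fin N → Fin n) :
    ℕ → Fin N → Fin n
  | 0 => w
  | r + 1 => tokenStep (M (t₁ + r + 1)) (R (r + 1)).1 (R (r + 1)).2 (tokensFrom M t₁ R w r)


/-!
One round is symmetric under many independent coin flips. Rank the tokens of each pool by the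
random permutation and pair the token of rank `r` with the token of rank `c - 1 - r`, where `c` is
the size of the pool; in a pool of odd size the middle token is paired with itself. Exchanging the
ranks of a pair, or flipping the orientation bit in the case of a middle token, preserves the
uniform measure and exchanges the two end nodes for precisely the tokens of that pair. So we may
average over these coins: partners always end at opposite nodes, distinct pairs are independent,
and a pair contributes `g u * g v ≤ ((g u + g v) / 2) ^ 2` to the expectation of the product of
`g` over the new positions of the tokens. This is the one-round bound with `M *ᵥ g` in place of
`g`, and iterating it backwards through the rounds, starting from the indicator function of `D`,
gives the inequality. For a single token, the bounds for `D` and for its complement add up to `1`,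
so both are equalities.
-/

section NegativeCorrelation

open Finset
open scoped BigOperators Matrix

section Expectation

theorem pr_eq_expect {Ω : Type*} [Fintype Ω] (A : Ω → Prop) [DecidablePred A] :
    pr A = 𝔼 ω, if A ω then (1 : ℝ) else 0 := by
  rw [Fintype.expect_eq_sum_div_card, sum_boole, pr]
  congr!

theorem pr_add_pr_not {Ω : Type*} [Fintype Ω] [Nonempty Ω] (A : Ω → Prop) :
    pr A + pr (fun ω => ¬ A ω) = 1 := by
  classical
  rw [pr_eq_expect, pr_eq_expect, ← expect_add_distrib, ← Fintype.expect_one (ι := Ω)]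
  refine expect_congr rfl fun ω _ => ?_
  split_ifs <;> simp

theorem expect_pi_prod {ι K : Type*} [Fintype ι] [DecidableEq ι] {κ : ι → Type*}
    [∀ i, Fintype (κ i)] [Semifield K] [CharZero K] (f : ∀ i, κ i → K) :
    𝔼 x : ∀ i, κ i, ∏ i, f i (x i) = ∏ i, 𝔼 j, f i j := by
  simp only [Fintype.expect_eq_sum_div_card, prod_div_distrib, Fintype.prod_sum,
    Fintype.card_pi, Nat.cast_prod]

theorem expect_snoc {A K : Type*} [Fintype A] [AddCommMonoid K] [Module ℚ≥0 K] (r : ℕ)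
    (F : (Fin (r + 1) → A) → K) :
    𝔼 ω, F ω = 𝔼 ω : Fin r → A, 𝔼 a, F (Fin.snoc (α := fun _ => A) ω a) := by
  calc 𝔼 ω, F ω
      = 𝔼 x : A × (Fin r → A), F (Fin.snoc (α := fun _ => A) x.2 x.1) :=
        (Fintype.expect_equiv (Fin.snocEquiv fun _ : Fin (r + 1) => A) _ _ fun _ => rfl).symm
    _ = 𝔼 ω : Fin r → A, 𝔼 a, F (Fin.snoc (α := fun _ => A) ω a) := by
        rw [← univ_product_univ, expect_product, expect_comm]

end Expectation

section FiberRank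

variable {ι α P : Type*}

/-- The positions in a family of sorted lists of lengths `c u`: the pair `⟨u, r⟩` stands for the
element of rank `r` in the list with label `u`. -/
abbrev Slot (c : P → ℕ) := Σ u, Fin (c u)

theorem Slot.ext {c : P → ℕ} {x y : Slot c} (h₁ : x.1 = y.1) (h₂ : (x.2 : ℕ) = y.2) : x = y :=
  Sigma.ext h₁ ((Fin.heq_ext_iff (congrArg c h₁)).2 h₂)

variable [Fintype ι] [DecidableEq P]

/-- The number of elements of the fibre of `p` over `u`. -/
def fiberCard (p : ι → P) (u : P) : ℕ := #{j | p j = u}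

/-- The rank of `i` in its own fibre of `p` when this fibre is sorted by `κ`, counting from `0`. -/
def fiberRank [LinearOrder α] (p : ι → P) (κ : ι → α) (i : ι) : ℕ := #{j | p j = p i ∧ κ j < κ i}

variable [LinearOrder α] (p : ι → P)

theorem fiberRank_lt_fiberCard (κ : ι → α) (i : ι) : fiberRank p κ i < fiberCard p (p i) :=
  card_lt_card <| (ssubset_iff_of_subset fun _ => by simp +contextual).2 ⟨i, by simp⟩

theorem fiberRank_lt_fiberRank {κ : ι → α} {i j : ι} (hp : p i = p j) (h : κ i < κ j) :
    fiberRank p κ i < fiberRank p κ j := by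
  refine card_lt_card <| (ssubset_iff_of_subset fun k hk => ?_).2 ⟨i, by simp [hp, h]⟩
  simp only [mem_filter_univ] at hk ⊢
  exact ⟨hk.1.trans hp, hk.2.trans h⟩

theorem fiberRank_comp (κ : ι → α) (σ : Equiv.Perm ι) (hσ : ∀ j, p (σ j) = p j) (i : ι) :
    fiberRank p (κ ∘ σ) i = fiberRank p κ (σ i) :=
  card_equiv σ fun j => by simp [hσ]

/-- The slot taken by `i` when each fibre of `p` is sorted by `κ`. -/
def slotOf (κ : ι → α) (i : ι) : Slot (fiberCard p) :=
  ⟨p i, fiberRank p κ i, fiberRank_lt_fiberCard p κ i⟩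

theorem slotOf_injective {κ : ι → α} (hκ : Function.Injective κ) :
    Function.Injective (slotOf p κ) := by
  intro i j hij
  have hp : p i = p j := congrArg Sigma.fst hij
  have hr : fiberRank p κ i = fiberRank p κ j := congrArg (fun x => (x.2 : ℕ)) hij
  rcases lt_trichotomy (κ i) (κ j) with h | h | h
  · exact absurd hr (fiberRank_lt_fiberRank p hp h).ne
  · exact hκ h
  · exact absurd hr (fiberRank_lt_fiberRank p hp.symm h).ne'

theorem card_slot_fiberCard [Fintype P] : Fintype.card (Slot (fiberCard p)) = Fintype.card ι := by
  rw [Fintype.card_sigma, Fintype.sum_congr _ (fiberCard p) fun u => Fintype.card_fin _]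
  exact (card_eq_sum_card_fiberwise (s := univ) (t := univ) (f := p) (by simp)).symm

variable [Fintype P]

/-- Sorting each fibre of `p` by `κ`, as an equivalence between elements and slots. -/
noncomputable def slotEquiv (κ : ι ≃ α) : ι ≃ Slot (fiberCard p) :=
  Equiv.ofBijective (slotOf p κ) <| (Fintype.bijective_iff_injective_and_card _).2
    ⟨slotOf_injective p κ.injective, (card_slot_fiberCard p).symm⟩

/-- The ordering obtained from `κ` by letting the permutation `ρ` act on the slots. -/
noncomputable def reorder (ρ : Equiv.Perm (Slot (fiberCard p))) (κ : ι ≃ α) : ι ≃ α :=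
  ((slotEquiv p κ).trans (ρ.trans (slotEquiv p κ).symm)).trans κ

variable {ρ : Equiv.Perm (Slot (fiberCard p))}

theorem slotEquiv_reorder (hρ : ∀ x, (ρ x).1 = x.1) (κ : ι ≃ α) (i : ι) :
    slotEquiv p (reorder p ρ κ) i = ρ (slotEquiv p κ i) := by
  set σ : Equiv.Perm ι := (slotEquiv p κ).trans (ρ.trans (slotEquiv p κ).symm)
  have hslot (j : ι) : slotEquiv p κ (σ j) = ρ (slotEquiv p κ j) := Equiv.apply_symm_apply _ _
  have hσ (j : ι) : p (σ j) = p j := (congrArg Sigma.fst (hslot j)).trans (hρ _)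
  rw [← hslot]
  exact Slot.ext (hσ i).symm (fiberRank_comp p κ σ hσ i)

theorem reorder_symm_reorder (hρ : ∀ x, (ρ x).1 = x.1) (κ : ι ≃ α) :
    reorder p ρ.symm (reorder p ρ κ) = κ := by
  have hslot : slotEquiv p (reorder p ρ κ) = (slotEquiv p κ).trans ρ :=
    Equiv.ext (slotEquiv_reorder p hρ κ)
  ext i
  rw [reorder, hslot]
  simp [reorder]

theorem reorder_bijective (hρ : ∀ x, (ρ x).1 = x.1) :
    Function.Bijective (reorder (α := α) p ρ) :=
  have hρ' (x) : (ρ.symm x).1 = x.1 := by rw [← hρ, Equiv.apply_symm_apply]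
  Function.bijective_iff_has_inverse.2
    ⟨reorder p ρ.symm, reorder_symm_reorder p hρ, reorder_symm_reorder p hρ'⟩

end FiberRank

section PairFlip

variable {X : Type*} {τ : X → X}

/-- The exchange of `x` and `τ x` on those orbits of the involution `τ` whose coin shows `true`;
the coin of the orbit of `x` is indexed by the unordered pair `s(x, τ x)`. -/
def orbitFlip (hτ : Function.Involutive τ) (s : Sym2 X → Bool) : Equiv.Perm X :=
  Function.Involutive.toPerm (fun x => if s s(x, τ x) then τ x else x) fun x => by
    by_cases hs : s s(x, τ x)
    · simp [hs, hτ x, Sym2.eq_swap (a := τ x)]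
    · simp [hs]

theorem orbitFlip_apply (hτ : Function.Involutive τ) (s : Sym2 X → Bool) (x : X) :
    orbitFlip hτ s x = if s s(x, τ x) then τ x else x := rfl

variable {a b : X → ℝ}

theorem expect_coin_prod_le (hab : ∀ x, τ x ≠ x → a (τ x) = b x ∧ b (τ x) = a x) {S : Finset X}
    {z : Sym2 X} (hS : ∀ x ∈ S, s(x, τ x) = z) :
    𝔼 β : Bool, ∏ x ∈ S, (if β then b x else a x) ≤ ∏ x ∈ S, (a x + b x) / 2 := by
  rw [Fintype.expect_eq_sum_div_card, Fintype.sum_bool, Fintype.card_bool]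
  simp only [if_true, Bool.false_eq_true, if_false]
  classical
  rcases S.eq_empty_or_nonempty with rfl | ⟨x, hx⟩
  · norm_num
  have hsub : ∀ y ∈ S, y = x ∨ y = τ x := fun y hy => by
    have : y ∈ s(x, τ x) := by rw [hS x hx, ← hS y hy]; exact Sym2.mem_mk_left _ _
    exact Sym2.mem_iff.1 this
  by_cases hmem : τ x ∈ S ∧ τ x ≠ x
  · obtain ⟨hτx, hne⟩ := hmem
    have hpair : S = {x, τ x} := Subset.antisymm (fun y hy => by simpa using hsub y hy)
      (by simp [insert_subset_iff, hx, hτx])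
    rw [hpair, prod_pair hne.symm, prod_pair hne.symm, prod_pair hne.symm,
      (hab x hne).1, (hab x hne).2]
    push_cast
    linarith [sq_nonneg (a x - b x)]
  · have hsingle : S = {x} := eq_singleton_iff_unique_mem.2 ⟨hx, fun y hy => by
      rcases hsub y hy with rfl | rfl
      · rfl
      · exact not_not.1 fun hne => hmem ⟨hy, hne⟩⟩
    simp only [hsingle, prod_singleton]
    push_cast
    linarith

theorem expect_orbit_prod_le [Fintype X] [DecidableEq X] (ha : ∀ x, 0 ≤ a x) (hb : ∀ x, 0 ≤ b x)
    (hab : ∀ x, τ x ≠ x → a (τ x) = b x ∧ b (τ x) = a x) (B : Finset X) :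
    𝔼 s : Sym2 X → Bool, ∏ x ∈ B, (if s s(x, τ x) then b x else a x) ≤
      ∏ x ∈ B, (a x + b x) / 2 := by
  let orbit (z : Sym2 X) : Finset X := {x ∈ B | s(x, τ x) = z}
  calc 𝔼 s : Sym2 X → Bool, ∏ x ∈ B, (if s s(x, τ x) then b x else a x)
      = 𝔼 s : Sym2 X → Bool, ∏ z, ∏ x ∈ orbit z, (if s z then b x else a x) := by
        refine expect_congr rfl fun s _ => ?_
        rw [← prod_fiberwise B fun x => s(x, τ x)]
        exact prod_congr rfl fun z _ => prod_congr rfl fun x hx => by rw [(mem_filter.1 hx).2]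
    _ = ∏ z, 𝔼 β : Bool, ∏ x ∈ orbit z, (if β then b x else a x) :=
        expect_pi_prod fun z (β : Bool) => ∏ x ∈ orbit z, (if β then b x else a x)
    _ ≤ ∏ z, ∏ x ∈ orbit z, (a x + b x) / 2 := by
        refine prod_le_prod (fun z _ => ?_) fun z _ =>
          expect_coin_prod_le hab fun x hx => (mem_filter.1 hx).2
        refine expect_nonneg fun β _ => prod_nonneg fun x _ => ?_
        split_ifs
        exacts [hb x, ha x]
    _ = ∏ x ∈ B, (a x + b x) / 2 := prod_fiberwise B _ _

end PairFlip

section Mirror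

variable {P : Type*} {c : P → ℕ}

/-- The partner of a slot: rank `r` and rank `c u - 1 - r` are exchanged. -/
def mirror (x : Slot c) : Slot c := ⟨x.1, x.2.rev⟩

theorem mirror_involutive : Function.Involutive (mirror (c := c)) := fun x => by simp [mirror]

theorem mirror_eq_self_iff {x : Slot c} : mirror x = x ↔ (x.2 : ℕ) + x.2 + 1 = c x.1 := by
  have hval : ((mirror x).2 : ℕ) = c x.1 - (x.2 + 1) := Fin.val_rev x.2
  have hlt := x.2.isLt
  exact ⟨fun h => by rw [h] at hval; omega, fun h => Slot.ext rfl (by omega)⟩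

theorem eq_of_mirror_eq_self {x y : Slot c} (hx : mirror x = x) (hy : mirror y = y)
    (hxy : x.1 = y.1) : x = y := by
  rw [mirror_eq_self_iff] at hx hy
  have hc : c x.1 = c y.1 := congrArg c hxy
  exact Slot.ext hxy (by omega)

theorem fst_orbitFlip_mirror (s : Sym2 (Slot c) → Bool) (x : Slot c) :
    (orbitFlip mirror_involutive s x).1 = x.1 := by
  rw [orbitFlip_apply]
  split_ifs <;> rfl

end Mirror

namespace Matching

variable {n : ℕ} (m : Matching n)

/-- The smaller endpoint of the matching edge at `u` (`u` itself if it is unmatched), which serves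
as the label of that edge and of the pool of tokens on it. -/
def lo (u : Fin n) : Fin n := min u (m.f u)

theorem lo_eq_or_f_lo_eq (u : Fin n) : m.lo u = u ∨ m.f (m.lo u) = u := by
  rcases min_choice u (m.f u) with h | h
  · exact Or.inl h
  · exact Or.inr (by rw [lo, h, m.invol])

theorem lo_f (u : Fin n) : m.lo (m.f u) = m.lo u := by
  rw [lo, lo, m.invol, min_comm]

theorem lo_eq_lo_iff {u v : Fin n} : m.lo u = m.lo v ↔ u = m.lo v ∨ u = m.f (m.lo v) := by
  have hlo : m.lo (m.lo v) = m.lo v := by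
    have hmin : m.lo v = v ∨ m.lo v = m.f v := min_choice v (m.f v)
    rcases hmin with h | h
    · rw [h, h]
    · rw [h, lo_f, h]
  constructor
  · intro h
    rcases m.lo_eq_or_f_lo_eq u with hu | hu
    · exact Or.inl (by rw [← hu, h])
    · exact Or.inr (by rw [← h, hu])
  · rintro (rfl | rfl)
    · exact hlo
    · rw [lo_f, hlo]

theorem matrix_mulVec (g : Fin n → ℝ) (u : Fin n) :
    (m.matrix *ᵥ g) u = (g u + g (m.f u)) / 2 := by
  rw [Matrix.mulVec, dotProduct]
  simp only [matrix, Matrix.of_apply]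
  by_cases h : m.f u = u
  · simp [h]
  · have hfilter : ({v | v = u ∨ v = m.f u} : Finset (Fin n)) = {u, m.f u} := by ext; simp
    simp only [h, if_false, ite_mul, zero_mul, ← sum_filter, hfilter]
    rw [sum_pair (Ne.symm h)]
    ring

theorem matrix_mulVec_f (g : Fin n → ℝ) (u : Fin n) :
    (m.matrix *ᵥ g) (m.f u) = (m.matrix *ᵥ g) u := by
  rw [matrix_mulVec, matrix_mulVec, m.invol, add_comm]

theorem matrix_mulVec_nonneg {g : Fin n → ℝ} (hg : ∀ v, 0 ≤ g v) (u : Fin n) :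
    0 ≤ (m.matrix *ᵥ g) u := by
  rw [matrix_mulVec]
  linarith [hg u, hg (m.f u)]

theorem matrix_mulVec_one : m.matrix *ᵥ (1 : Fin n → ℝ) = 1 := by
  ext u
  norm_num [matrix_mulVec]

end Matching

section Round

variable {n N : ℕ} (m : Matching n)

/-- The random choices of one round: an orientation of every pair and an ordering of the tokens. -/
abbrev RoundChoice (n N : ℕ) := (Fin n → Fin n → Bool) × Equiv.Perm (Fin N)

/-- The node which the orientations `φ` assign to the token in slot `x`, given pools of sizes
`c u` labelled by the smaller endpoints `u` of their edges. -/
def slotNode (c : Fin n → ℕ) (φ : Fin n → Fin n → Bool) (x : Slot c) : Fin n :=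
  if (x.2 : ℕ) < (if φ x.1 (m.f x.1) then (c x.1 + 1) / 2 else c x.1 / 2) then x.1 else m.f x.1

theorem tokenStep_eq_slotNode (φ : Fin n → Fin n → Bool) (π : Equiv.Perm (Fin N))
    (w : Fin N → Fin n) (i : Fin N) :
    tokenStep m φ π w i = slotNode m _ φ (slotEquiv (m.lo ∘ w) π i) := by
  have hpool (j : Fin N) : w j = m.lo (w i) ∨ w j = m.f (m.lo (w i)) ↔
      m.lo (w j) = m.lo (w i) := m.lo_eq_lo_iff.symm
  change _ = if fiberRank (m.lo ∘ w) π i < (if φ (m.lo (w i)) (m.f (m.lo (w i)))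
    then (fiberCard (m.lo ∘ w) (m.lo (w i)) + 1) / 2
    else fiberCard (m.lo ∘ w) (m.lo (w i)) / 2) then m.lo (w i) else m.f (m.lo (w i))
  by_cases hfix : m.f (w i) = w i
  · simp [tokenStep, hfix, Matching.lo]
  have hlo : (if w i < m.f (w i) then w i else m.f (w i)) = m.lo (w i) := by
    rw [Matching.lo, min_def_lt]
  have hhi : (if w i < m.f (w i) then m.f (w i) else w i) = m.f (m.lo (w i)) := by
    rw [Matching.lo, min_def_lt, apply_ite m.f, m.invol]
  simp only [tokenStep, hfix, if_false, hlo, hhi, hpool, filter_filter, fiberRank, fiberCard,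
    Function.comp_apply]

theorem matrix_mulVec_slotNode (g : Fin n → ℝ) (c : Fin n → ℕ) (φ : Fin n → Fin n → Bool)
    (x : Slot c) : (m.matrix *ᵥ g) (slotNode m c φ x) = (m.matrix *ᵥ g) x.1 := by
  rw [slotNode, apply_ite (m.matrix *ᵥ g), m.matrix_mulVec_f, ite_self]

variable {c : Fin n → ℕ}

/-- The orientations after the coin flips `s`: on an edge whose pool has a middle slot, the coin of
this slot acts on the orientation. -/
def orientFlip (s : Sym2 (Slot c) → Bool) (φ : Fin n → Fin n → Bool) : Fin n → Fin n → Bool :=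
  fun u v => φ u v ^^ decide (∃ x : Slot c, x.1 = u ∧ mirror x = x ∧ s s(x, x))

theorem orientFlip_involutive (s : Sym2 (Slot c) → Bool) :
    Function.Involutive (orientFlip s) := fun φ => by
  funext u v
  simp [orientFlip]

theorem orientFlip_of_mirror_eq_self (s : Sym2 (Slot c) → Bool) (φ : Fin n → Fin n → Bool)
    {x : Slot c} (hx : mirror x = x) (v : Fin n) :
    orientFlip s φ x.1 v = (φ x.1 v ^^ s s(x, x)) := by
  have hcoin : (∃ y : Slot c, y.1 = x.1 ∧ mirror y = y ∧ s s(y, y)) ↔ s s(x, x) :=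
    ⟨fun ⟨_, hxy, hy, hs⟩ => eq_of_mirror_eq_self hy hx hxy ▸ hs, fun hs => ⟨x, rfl, hx, hs⟩⟩
  simp [orientFlip, hcoin]

theorem slotNode_of_mirror_eq_self (φ : Fin n → Fin n → Bool) {x : Slot c} (hx : mirror x = x) :
    slotNode m c φ x = if φ x.1 (m.f x.1) then x.1 else m.f x.1 := by
  rw [mirror_eq_self_iff] at hx
  unfold slotNode
  split_ifs <;> first | rfl | omega

theorem slotNode_mirror (φ ψ : Fin n → Fin n → Bool) {x : Slot c} (hx : mirror x ≠ x) :
    slotNode m c ψ (mirror x) = m.f (slotNode m c φ x) := by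
  rw [Ne, mirror_eq_self_iff] at hx
  have hval : (x.2.rev : ℕ) = c x.1 - (x.2 + 1) := Fin.val_rev x.2
  have hlt := x.2.isLt
  have hbelow : (x.2.rev : ℕ) < (if ψ x.1 (m.f x.1) then (c x.1 + 1) / 2 else c x.1 / 2) ↔
      ¬ (x.2 : ℕ) < (if φ x.1 (m.f x.1) then (c x.1 + 1) / 2 else c x.1 / 2) := by
    split_ifs <;> omega
  calc slotNode m c ψ (mirror x)
      = if ¬ (x.2 : ℕ) < (if φ x.1 (m.f x.1) then (c x.1 + 1) / 2 else c x.1 / 2)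
          then x.1 else m.f x.1 := if_congr hbelow rfl rfl
    _ = m.f (slotNode m c φ x) := by rw [slotNode, ite_not, apply_ite m.f, m.invol]

theorem slotNode_orbitFlip (s : Sym2 (Slot c) → Bool) (φ : Fin n → Fin n → Bool) (x : Slot c) :
    slotNode m c (orientFlip s φ) (orbitFlip mirror_involutive s x) =
      if s s(x, mirror x) then m.f (slotNode m c φ x) else slotNode m c φ x := by
  rw [orbitFlip_apply]
  by_cases hx : mirror x = x
  · simp only [hx, ite_self]
    rw [slotNode_of_mirror_eq_self m _ hx, slotNode_of_mirror_eq_self m _ hx,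
      orientFlip_of_mirror_eq_self s φ hx]
    cases φ x.1 (m.f x.1) <;> cases s s(x, x) <;> simp [m.invol]
  · split_ifs
    · exact slotNode_mirror m _ _ hx
    · have hx' : mirror (mirror x) ≠ mirror x := fun h => hx (mirror_involutive.injective h)
      rw [← mirror_involutive x, slotNode_mirror m φ _ hx', slotNode_mirror m φ φ hx, m.invol,
        mirror_involutive]

/-- The action of the coin flips `s` on the random choices of a round with token placement `w`. -/
noncomputable def choiceFlip (w : Fin N → Fin n) (s : Sym2 (Slot (fiberCard (m.lo ∘ w))) → Bool) :
    RoundChoice n N → RoundChoice n N :=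
  Prod.map (orientFlip s) (reorder (m.lo ∘ w) (orbitFlip mirror_involutive s))

theorem choiceFlip_bijective (w : Fin N → Fin n)
    (s : Sym2 (Slot (fiberCard (m.lo ∘ w))) → Bool) : Function.Bijective (choiceFlip m w s) :=
  (orientFlip_involutive s).bijective.prodMap (reorder_bijective _ (fst_orbitFlip_mirror s))

theorem tokenStep_choiceFlip (w : Fin N → Fin n)
    (s : Sym2 (Slot (fiberCard (m.lo ∘ w))) → Bool) (ω : RoundChoice n N) (i : Fin N) :
    tokenStep m (choiceFlip m w s ω).1 (choiceFlip m w s ω).2 w i =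
      if s s(slotEquiv (m.lo ∘ w) ω.2 i, mirror (slotEquiv (m.lo ∘ w) ω.2 i))
      then m.f (tokenStep m ω.1 ω.2 w i) else tokenStep m ω.1 ω.2 w i := by
  simp only [tokenStep_eq_slotNode, choiceFlip, Prod.map_fst, Prod.map_snd]
  rw [slotEquiv_reorder _ (fst_orbitFlip_mirror s), slotNode_orbitFlip]

theorem expect_choiceFlip_prod_le (w : Fin N → Fin n) {g : Fin n → ℝ} (hg : ∀ v, 0 ≤ g v)
    (B : Finset (Fin N)) (ω : RoundChoice n N) :
    𝔼 s : Sym2 (Slot (fiberCard (m.lo ∘ w))) → Bool, ∏ i ∈ B,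
        g (tokenStep m (choiceFlip m w s ω).1 (choiceFlip m w s ω).2 w i) ≤
      ∏ i ∈ B, (m.matrix *ᵥ g) (w i) := by
  let e := slotEquiv (m.lo ∘ w) ω.2
  let node := slotNode m (fiberCard (m.lo ∘ w)) ω.1
  have hpair (x) (hx : mirror x ≠ x) :
      g (node (mirror x)) = g (m.f (node x)) ∧ g (m.f (node (mirror x))) = g (node x) := by
    simp only [node, slotNode_mirror m ω.1 ω.1 hx, m.invol, and_self]
  have hmean (i : Fin N) :
      (g (node (e i)) + g (m.f (node (e i)))) / 2 = (m.matrix *ᵥ g) (w i) := by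
    rw [← Matching.matrix_mulVec, matrix_mulVec_slotNode]
    change (m.matrix *ᵥ g) (m.lo (w i)) = _
    rcases m.lo_eq_or_f_lo_eq (w i) with h | h
    · rw [h]
    · rw [← m.matrix_mulVec_f, h]
  have hbound := expect_orbit_prod_le (fun x => hg (node x)) (fun x => hg (m.f (node x))) hpair
    (B.map e.toEmbedding)
  simpa only [prod_map, Equiv.coe_toEmbedding, hmean, tokenStep_choiceFlip, apply_ite g,
    tokenStep_eq_slotNode m ω.1] using hbound

theorem expect_prod_tokenStep_le (w : Fin N → Fin n) {g : Fin n → ℝ} (hg : ∀ v, 0 ≤ g v)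
    (B : Finset (Fin N)) :
    𝔼 ω : RoundChoice n N, ∏ i ∈ B, g (tokenStep m ω.1 ω.2 w i) ≤
      ∏ i ∈ B, (m.matrix *ᵥ g) (w i) := by
  let F (ω : RoundChoice n N) : ℝ := ∏ i ∈ B, g (tokenStep m ω.1 ω.2 w i)
  have hflip (s) : 𝔼 ω, F (choiceFlip m w s ω) = 𝔼 ω, F ω :=
    Fintype.expect_bijective _ (choiceFlip_bijective m w s) _ _ fun _ => rfl
  calc 𝔼 ω, F ω
      = 𝔼 s, 𝔼 ω, F (choiceFlip m w s ω) := by simp only [hflip, Fintype.expect_const]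
    _ = 𝔼 ω, 𝔼 s, F (choiceFlip m w s ω) := expect_comm _ _ _
    _ ≤ 𝔼 _ω : RoundChoice n N, ∏ i ∈ B, (m.matrix *ᵥ g) (w i) :=
        expect_le_expect fun ω _ => expect_choiceFlip_prod_le m w hg B ω
    _ = ∏ i ∈ B, (m.matrix *ᵥ g) (w i) := Fintype.expect_const _

end Round

section Rounds

variable {n N : ℕ} (M : ℕ → Matching n) (t : ℕ)

theorem prodMatrix_zero : prodMatrix M (t + 1) (t + 0) = 1 := by
  simp [prodMatrix]

theorem prodMatrix_succ (r : ℕ) :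
    prodMatrix M (t + 1) (t + (r + 1)) =
      prodMatrix M (t + 1) (t + r) * (M (t + r + 1)).matrix := by
  have hlen : t + (r + 1) + 1 - (t + 1) = t + r + 1 - (t + 1) + 1 := by omega
  have hlast : t + 1 + 1 * (t + r + 1 - (t + 1)) = t + r + 1 := by omega
  rw [prodMatrix, hlen, List.range'_concat, hlast, List.map_append, List.prod_append,
    List.map_singleton, List.prod_singleton, prodMatrix]

theorem prodMatrix_mulVec_one (r : ℕ) : prodMatrix M (t + 1) (t + r) *ᵥ 1 = 1 := by
  induction r with
  | zero => rw [prodMatrix_zero, Matrix.one_mulVec]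
  | succ r ih => rw [prodMatrix_succ, ← Matrix.mulVec_mulVec, Matching.matrix_mulVec_one, ih]

theorem lift_snoc_last {A : Type*} (a₀ : A) {r : ℕ} (ω : Fin r → A) (a : A) :
    lift a₀ (Fin.snoc (α := fun _ => A) ω a) (r + 1) = a := by
  simp [lift, Fin.snoc]

theorem lift_snoc_of_lt {A : Type*} (a₀ : A) {r : ℕ} (ω : Fin r → A) (a : A) {s : ℕ}
    (hs : s - 1 < r) : lift a₀ (Fin.snoc (α := fun _ => A) ω a) s = lift a₀ ω s := by
  simp [lift, Fin.snoc, hs, hs.trans (Nat.lt_succ_self r)]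

theorem tokensFrom_congr {R R' : ℕ → RoundChoice n N} (w : Fin N → Fin n) {r : ℕ}
    (h : ∀ s < r, R (s + 1) = R' (s + 1)) : tokensFrom M t R w r = tokensFrom M t R' w r := by
  induction r with
  | zero => rfl
  | succ r ih =>
    rw [tokensFrom, tokensFrom, ih fun s hs => h s (hs.trans r.lt_succ_self), h r r.lt_succ_self]

theorem tokensFrom_lift_snoc (a₀ : RoundChoice n N) (w : Fin N → Fin n) {r : ℕ}
    (ω : Fin r → RoundChoice n N) (a : RoundChoice n N) :
    tokensFrom M t (lift a₀ (Fin.snoc (α := fun _ => RoundChoice n N) ω a)) w (r + 1) =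
      tokenStep (M (t + r + 1)) a.1 a.2 (tokensFrom M t (lift a₀ ω) w r) := by
  rw [tokensFrom, lift_snoc_last, tokensFrom_congr M t w fun s hs => lift_snoc_of_lt a₀ ω a hs]

theorem expect_prod_tokensFrom_le (a₀ : RoundChoice n N) (w : Fin N → Fin n)
    (B : Finset (Fin N)) (r : ℕ) {g : Fin n → ℝ} (hg : ∀ v, 0 ≤ g v) :
    𝔼 ω : Fin r → RoundChoice n N, ∏ i ∈ B, g (tokensFrom M t (lift a₀ ω) w r i) ≤
      ∏ i ∈ B, (prodMatrix M (t + 1) (t + r) *ᵥ g) (w i) := by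
  induction r generalizing g with
  | zero =>
    rw [prodMatrix_zero]
    simp [tokensFrom]
  | succ r ih =>
    let m := M (t + r + 1)
    calc 𝔼 ω : Fin (r + 1) → RoundChoice n N, ∏ i ∈ B, g (tokensFrom M t (lift a₀ ω) w (r + 1) i)
        = 𝔼 ω : Fin r → RoundChoice n N, 𝔼 a : RoundChoice n N,
            ∏ i ∈ B, g (tokenStep m a.1 a.2 (tokensFrom M t (lift a₀ ω) w r) i) := by
          simp only [expect_snoc, tokensFrom_lift_snoc, m]
      _ ≤ 𝔼 ω : Fin r → RoundChoice n N,
            ∏ i ∈ B, (m.matrix *ᵥ g) (tokensFrom M t (lift a₀ ω) w r i) :=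
          expect_le_expect fun ω _ => expect_prod_tokenStep_le m _ hg B
      _ ≤ ∏ i ∈ B, (prodMatrix M (t + 1) (t + r) *ᵥ (m.matrix *ᵥ g)) (w i) :=
          ih (m.matrix_mulVec_nonneg hg)
      _ = ∏ i ∈ B, (prodMatrix M (t + 1) (t + (r + 1)) *ᵥ g) (w i) := by
          rw [prodMatrix_succ, Matrix.mulVec_mulVec]

theorem pr_forall_tokensFrom_mem_le (a₀ : RoundChoice n N) (w : Fin N → Fin n)
    (B : Finset (Fin N)) (r : ℕ) (D : Finset (Fin n)) :
    pr (fun ω : Fin r → RoundChoice n N => ∀ i ∈ B, tokensFrom M t (lift a₀ ω) w r i ∈ D) ≤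
      ∏ i ∈ B, ∑ v ∈ D, prodMatrix M (t + 1) (t + r) (w i) v := by
  have h := expect_prod_tokensFrom_le M t a₀ w B r (g := fun v => if v ∈ D then 1 else 0)
    fun v => by split_ifs <;> norm_num
  simpa [pr_eq_expect, prod_ite_zero, Matrix.mulVec, dotProduct] using h

theorem pr_tokensFrom_mem (a₀ : RoundChoice n N) (w : Fin N → Fin n) (i : Fin N) (r : ℕ)
    (D : Finset (Fin n)) :
    pr (fun ω : Fin r → RoundChoice n N => tokensFrom M t (lift a₀ ω) w r i ∈ D) =
      ∑ v ∈ D, prodMatrix M (t + 1) (t + r) (w i) v := by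
  have hD := pr_forall_tokensFrom_mem_le M t a₀ w {i} r D
  have hDc := pr_forall_tokensFrom_mem_le M t a₀ w {i} r Dᶜ
  simp only [mem_singleton, forall_eq, prod_singleton, mem_compl] at hD hDc
  have hpr := pr_add_pr_not fun ω : Fin r → RoundChoice n N => tokensFrom M t (lift a₀ ω) w r i ∈ D
  have hrow : ∑ v ∈ D, prodMatrix M (t + 1) (t + r) (w i) v +
      ∑ v ∈ Dᶜ, prodMatrix M (t + 1) (t + r) (w i) v = 1 := by
    simpa [Matrix.mulVec, dotProduct, sum_add_sum_compl] using
      congrFun (prodMatrix_mulVec_one M t r) (w i)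
  linarith

end Rounds

end NegativeCorrelation

/-- Negative correlation of tokens:  for any subset `𝓑` of the
tokens, any subset `D` of the nodes and rounds `t₁ < t₂`,
`P(⋀_{i∈𝓑} w_i^{(t₂)} ∈ D) ≤ ∏_{i∈𝓑} M^{[t₁+1,t₂]}_{w_i^{(t₁)},D}
  = ∏_{i∈𝓑} P(w_i^{(t₂)} ∈ D)`. -/
theorem stmt12 {n N : ℕ} (hn : 0 < n) (M : ℕ → Matching n) (t₁ t₂ : ℕ)
    (h : t₁ < t₂) (w0 : Fin N → Fin n) (B : Finset (Fin N)) (D : Finset (Fin n)) :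
    (pr (fun ω : Fin (t₂ - t₁) → (Fin n → Fin n → Bool) × Equiv.Perm (Fin N) =>
        ∀ i ∈ B, tokensFrom M t₁ (lift (orientDefault n, Equiv.refl (Fin N)) ω) w0
          (t₂ - t₁) i ∈ D)
      ≤ ∏ i ∈ B, ∑ v ∈ D, prodMatrix M (t₁ + 1) t₂ (w0 i) v) ∧
    ((∏ i ∈ B, ∑ v ∈ D, prodMatrix M (t₁ + 1) t₂ (w0 i) v)
      = ∏ i ∈ B,
          pr (fun ω : Fin (t₂ - t₁) → (Fin n → Fin n → Bool) × Equiv.Perm (Fin N) =>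
            tokensFrom M t₁ (lift (orientDefault n, Equiv.refl (Fin N)) ω) w0
              (t₂ - t₁) i ∈ D)) := by
  obtain ⟨r, rfl⟩ := Nat.exists_eq_add_of_le h.le
  rw [Nat.add_sub_cancel_left]
  exact ⟨pr_forall_tokensFrom_mem_le M t₁ _ w0 B r D,
    Finset.prod_congr rfl fun i _ => (pr_tokensFrom_mem M t₁ _ w0 i r D).symm⟩

end LB
end

section
/- Let ε > 0 be a constant. For all sufficiently large n the following holds in the balancing circuit model on a graph with n vertices and round matrix satisfying λ(M) < 1: if x^{(0)} ∈ ℤ^n is a non-negative load vector with ‖x^{(0)}‖₁ ≤ n^{1−ε}, then after t = τ_cont(1, n^{−1}) rounds of the discrete process with independent uniformly random orientations, the discrepancy of x^{(t)} is at most 9/ε with probability at least 1 − 2n^{−1}. -/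
namespace LB


/-!
For positive weights `g`, one round of the process satisfies
`E[∏ g_u ^ X_u(t)] ≤ ∏ ((M g)_u) ^ X_u(t-1)`: matched pairs are independent, and a pair with
weights `a, b` splitting `s` tokens contributes the average of `a^⌈s/2⌉ b^⌊s/2⌋` and
`a^⌊s/2⌋ b^⌈s/2⌉`, at most `((a + b) / 2) ^ s` by AM-GM. Iterating gives
`E[∏ g_u ^ X_u(T)] ≤ ∏ ((M^{[1,T]} g)_u) ^ x_u`. Taking `g = z` at a node `v` and `1` elsewhere
bounds `E[z ^ X_v(T)]` by `exp ((z - 1) ∑ x_u M^{[1,T]}_{u,v})`. Once `[0,T]` is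
`(1, n⁻¹)`-smoothing every entry of `M^{[1,T]}` is at most `2 / n`, so `z = n ^ ε` makes this at
most `e²`. Markov's inequality and a union bound show that no node holds more than `9 / ε` tokens,
except with probability `e² n⁻⁸`.

In the balancing circuit model, `λ(M) < 1` makes the powers of the round matrix contract every
vector of sum zero to `0`, so some `[0,T]` is smoothing and the infimum `τ_cont` is attained.
-/

open scoped Matrix

section UniformProbability

variable {Ω Ω' ι : Type*} [Fintype Ω] [Fintype Ω'] [Fintype ι]

lemma ex_const [Nonempty Ω] (c : ℝ) : ex (fun _ : Ω => c) = c := by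
  simp [ex]

lemma ex_mono {Y Z : Ω → ℝ} (h : ∀ ω, Y ω ≤ Z ω) : ex Y ≤ ex Z :=
  div_le_div_of_nonneg_right (Finset.sum_le_sum fun ω _ => h ω) (Nat.cast_nonneg _)

lemma ex_nonneg {Z : Ω → ℝ} (h : ∀ ω, 0 ≤ Z ω) : 0 ≤ ex Z :=
  div_nonneg (Finset.sum_nonneg fun ω _ => h ω) (Nat.cast_nonneg _)

lemma ex_div (Z : Ω → ℝ) (c : ℝ) : ex (fun ω => Z ω / c) = ex Z / c := by
  simp only [ex, ← Finset.sum_div, div_right_comm]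

lemma ex_add (Y Z : Ω → ℝ) : ex (fun ω => Y ω + Z ω) = ex Y + ex Z := by
  simp only [ex, Finset.sum_add_distrib, add_div]

lemma ex_sum (Z : ι → Ω → ℝ) : ex (fun ω => ∑ i, Z i ω) = ∑ i, ex (Z i) := by
  simp only [ex, ← Finset.sum_div]
  rw [Finset.sum_comm]

lemma ex_comp_equiv (e : Ω ≃ Ω') (Z : Ω' → ℝ) : ex (fun ω => Z (e ω)) = ex Z := by
  simp only [ex, Equiv.sum_comp e Z, Fintype.card_congr e]

lemma ex_prod (Z : Ω × Ω' → ℝ) : ex Z = ex fun ω => ex fun ω' => Z (ω, ω') := by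
  simp only [ex, Fintype.sum_prod_type, ← Finset.sum_div, Fintype.card_prod, Nat.cast_mul,
    div_div, mul_comm]

lemma ex_prod_symm (Z : Ω × Ω' → ℝ) : ex Z = ex fun ω' => ex fun ω => Z (ω, ω') := by
  rw [← ex_comp_equiv (Equiv.prodComm Ω' Ω), ex_prod]
  rfl

lemma ex_snoc {T : ℕ} (Z : (Fin (T + 1) → Ω) → ℝ) :
    ex Z = ex fun ω : Fin T → Ω => ex fun a => Z (Fin.snoc (α := fun _ => Ω) ω a) := by
  rw [← ex_comp_equiv (Fin.snocEquiv fun _ => Ω), ex_prod_symm]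
  rfl

open scoped Classical in
lemma pr_eq_ex (A : Ω → Prop) : pr A = ex fun ω => if A ω then 1 else 0 := by
  simp only [pr, ex, Finset.sum_boole]

lemma pr_mono {A B : Ω → Prop} (h : ∀ ω, A ω → B ω) : pr A ≤ pr B := by
  classical
  rw [pr_eq_ex, pr_eq_ex]
  refine ex_mono fun ω => ?_
  split_ifs with hA hB <;> simp_all

lemma one_sub_pr [Nonempty Ω] (A : Ω → Prop) : 1 - pr A = pr fun ω => ¬ A ω := by
  classical
  have hadd : pr A + pr (fun ω => ¬ A ω) = 1 := calc
    pr A + pr (fun ω => ¬ A ω) = ex fun _ : Ω => 1 := by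
      rw [pr_eq_ex, pr_eq_ex, ← ex_add]
      congr with ω
      by_cases h : A ω <;> simp [h]
    _ = 1 := ex_const 1
  linarith

lemma pr_exists_le (A : ι → Ω → Prop) : pr (fun ω => ∃ i, A i ω) ≤ ∑ i, pr (A i) := by
  classical
  simp only [pr_eq_ex, ← ex_sum]
  refine ex_mono fun ω => ?_
  split_ifs with h
  · obtain ⟨i, hi⟩ := h
    simpa [hi] using Finset.single_le_sum (f := fun i => if A i ω then (1 : ℝ) else 0)
      (fun i _ => by positivity) (Finset.mem_univ i)
  · exact Finset.sum_nonneg fun i _ => by positivity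

lemma pr_le_ex_div {A : Ω → Prop} {Z : Ω → ℝ} {c : ℝ} (hc : 0 < c) (hZ : ∀ ω, 0 ≤ Z ω)
    (hA : ∀ ω, A ω → c ≤ Z ω) : pr A ≤ ex Z / c := by
  classical
  rw [pr_eq_ex, ← ex_div]
  refine ex_mono fun ω => ?_
  split_ifs with h
  · exact (one_le_div hc).2 (hA ω h)
  · exact div_nonneg (hZ ω) hc.le

variable [DecidableEq ι] {A : ι → Type*} [∀ i, Fintype (A i)]

lemma ex_prod_pi (F : ∀ i, A i → ℝ) :
    ex (fun φ : ∀ i, A i => ∏ i, F i (φ i)) = ∏ i, ex (F i) := by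
  simp only [ex, Finset.prod_div_distrib, Finset.prod_univ_sum, Fintype.piFinset_univ,
    Fintype.card_pi, Nat.cast_prod]

lemma ex_eval [∀ i, Nonempty (A i)] (j : ι) (h : A j → ℝ) :
    ex (fun φ : ∀ i, A i => h (φ j)) = ex h := by
  calc ex (fun φ : ∀ i, A i => h (φ j)) = ex fun p : A j × (∀ i : {i // i ≠ j}, A i) => h p.1 :=
        ex_comp_equiv (Equiv.piSplitAt j A) fun p => h p.1
    _ = ex h := by simp only [ex_prod, ex_const]

end UniformProbability

section Discrepancy

variable {n : ℕ}

lemma abs_sub_le_disc (x : Fin n → ℝ) (u v : Fin n) : |x u - x v| ≤ disc x :=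
  (le_ciSup (f := fun v => |x u - x v|) (Set.finite_range _).bddAbove v).trans
    (le_ciSup (f := fun u => ⨆ v, |x u - x v|) (Set.finite_range _).bddAbove u)

lemma disc_le {x : Fin n → ℝ} {c : ℝ} (hc : 0 ≤ c) (h : ∀ u v, |x u - x v| ≤ c) : disc x ≤ c :=
  Real.iSup_le (fun u => Real.iSup_le (h u) hc) hc

lemma disc_le_of_mem_Icc {x : Fin n → ℝ} {c : ℝ} (hc : 0 ≤ c) (h : ∀ u, x u ∈ Set.Icc 0 c) :
    disc x ≤ c :=
  disc_le hc fun u v => abs_sub_le_of_nonneg_of_le (h u).1 (h u).2 (h v).1 (h v).2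

lemma apply_le_sum_div_add_disc (x : Fin n → ℝ) (v : Fin n) :
    x v ≤ (∑ u, x u) / n + disc x := by
  have hn : (0 : ℝ) < n := Nat.cast_pos.2 v.pos
  have hsum : ∑ _u : Fin n, x v ≤ ∑ u, (x u + disc x) := Finset.sum_le_sum fun u _ => by
    linarith [(abs_le.1 (abs_sub_le_disc x v u)).2]
  rw [div_add' _ _ _ hn.ne', le_div_iff₀ hn]
  simp only [Finset.sum_add_distrib, Finset.sum_const, Finset.card_univ, Fintype.card_fin,
    nsmul_eq_mul] at hsum
  linarith

lemma disc_vecMul_le {P : Matrix (Fin n) (Fin n) ℝ} {s c : ℝ} (hc : 0 ≤ c)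
    (hcol : ∀ v, ∑ u, P u v = s) (hP : ∀ u v w, |P u v - P u w| ≤ c) (ξ : Fin n → ℝ) :
    disc (ξ ᵥ* P) ≤ n * c * disc ξ := by
  have hdisc : 0 ≤ disc ξ := Real.iSup_nonneg fun _ => Real.iSup_nonneg fun _ => abs_nonneg _
  refine disc_le (by positivity) fun v w => ?_
  have hshift : (ξ ᵥ* P) v - (ξ ᵥ* P) w = ∑ u, (ξ u - ξ v) * (P u v - P u w) := by
    simp only [Matrix.vecMul, dotProduct, sub_mul, mul_sub, Finset.sum_sub_distrib,
      ← Finset.mul_sum, hcol]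
    ring
  calc |(ξ ᵥ* P) v - (ξ ᵥ* P) w| ≤ ∑ u, |(ξ u - ξ v) * (P u v - P u w)| :=
        hshift ▸ Finset.abs_sum_le_sum_abs _ _
    _ ≤ ∑ _u : Fin n, disc ξ * c := Finset.sum_le_sum fun u _ => by
        rw [abs_mul]
        exact mul_le_mul (abs_sub_le_disc ξ u v) (hP u v w) (abs_nonneg _) hdisc
    _ = n * c * disc ξ := by
        rw [Finset.sum_const, Finset.card_univ, Fintype.card_fin, nsmul_eq_mul]
        ring

end Discrepancy

section MatchingMatrix

variable {n : ℕ}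

lemma Matching.matrix_mulVec_apply (m : Matching n) (g : Fin n → ℝ) (u : Fin n) :
    (m.matrix *ᵥ g) u = (g u + g (m.f u)) / 2 := by
  by_cases h : m.f u = u
  · simp [Matching.matrix, Matrix.mulVec, dotProduct, h]
  · have hrow : ∀ v, m.matrix u v = (if v = u then 1 / 2 else 0) +
        if v = m.f u then 1 / 2 else 0 := fun v => by
      simp only [Matching.matrix, Matrix.of_apply, if_neg h]
      split_ifs <;> simp_all
    simp only [Matrix.mulVec, dotProduct, hrow, add_mul, ite_mul, zero_mul, Finset.sum_add_distrib,
      Finset.sum_ite_eq', Finset.mem_univ, if_true]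
    ring

lemma Matching.matrix_mulVec_pos (m : Matching n) {g : Fin n → ℝ} (hg : ∀ u, 0 < g u)
    (u : Fin n) : 0 < (m.matrix *ᵥ g) u := by
  rw [m.matrix_mulVec_apply]
  exact half_pos (add_pos (hg u) (hg _))

lemma Matching.matrix_isSymm (m : Matching n) : m.matrix.IsSymm := by
  refine Matrix.IsSymm.ext fun u v => ?_
  rcases eq_or_ne u v with rfl | huv
  · rfl
  have hinv : v = m.f u ↔ u = m.f v := by
    constructor <;> (rintro rfl; exact (m.invol _).symm)
  by_cases h : v = m.f u
  · subst h
    simp [Matching.matrix, m.invol, huv, huv.symm]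
  · simp [Matching.matrix, huv, huv.symm, h, mt hinv.2 h]

lemma Matching.matrix_mem_doublyStochastic (m : Matching n) :
    m.matrix ∈ doublyStochastic ℝ (Fin n) := by
  have hone : m.matrix *ᵥ 1 = 1 := by
    funext u
    simp [m.matrix_mulVec_apply]
  refine mem_doublyStochastic.2 ⟨fun u v => ?_, hone, ?_⟩
  · simp only [Matching.matrix, Matrix.of_apply]
    positivity
  · rw [← Matrix.mulVec_transpose, m.matrix_isSymm, hone]

lemma prodMatrix_mem_doublyStochastic (M : ℕ → Matching n) (t₁ t₂ : ℕ) :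
    prodMatrix M t₁ t₂ ∈ doublyStochastic ℝ (Fin n) :=
  Submonoid.list_prod_mem _ <| List.forall_mem_map.2 fun s _ => (M s).matrix_mem_doublyStochastic

lemma prodMatrix_one_succ (M : ℕ → Matching n) (T : ℕ) :
    prodMatrix M 1 (T + 1) = prodMatrix M 1 T * (M (T + 1)).matrix := by
  simp [prodMatrix, List.range'_concat, add_comm]

lemma prodMatrix_le_of_isSmoothing {M : ℕ → Matching n} {t₁ t₂ : ℕ} {δ : ℝ}
    (h : IsSmoothing M t₁ t₂ 1 δ) (u v : Fin n) :
    prodMatrix M (t₁ + 1) t₂ u v ≤ (n : ℝ)⁻¹ + δ := by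
  have hsingle : disc (Pi.single u (1 : ℝ)) ≤ 1 := disc_le_of_mem_Icc zero_le_one fun w => by
    rw [Pi.single_apply]
    split_ifs <;> simp
  have hdisc := h _ hsingle
  have hmean := apply_le_sum_div_add_disc (prodMatrix M (t₁ + 1) t₂ u) v
  rw [sum_row_of_mem_doublyStochastic (prodMatrix_mem_doublyStochastic M _ _), one_div] at hmean
  rw [Matrix.single_one_vecMul] at hdisc
  exact hmean.trans (add_le_add_right hdisc _)

end MatchingMatrix

section SpectralGap

open WithLp Matrix

variable {n d : ℕ}

lemma lamMax_nonneg (M : Matrix (Fin n) (Fin n) ℝ) : 0 ≤ lamMax M :=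
  Real.iSup_nonneg fun _ => Real.sqrt_nonneg _

lemma norm_toEuclideanCLM_le (M : Matrix (Fin n) (Fin n) ℝ) {y : EuclideanSpace ℝ (Fin n)}
    (hy : ∑ u, y u = 0) : ‖toEuclideanCLM (𝕜 := ℝ) M y‖ ≤ lamMax M * ‖y‖ := by
  rcases eq_or_ne y 0 with rfl | hy0
  · simp
  have hnorm (z : EuclideanSpace ℝ (Fin n)) : ‖z‖ = √(∑ u, z u ^ 2) := by
    simp [EuclideanSpace.norm_eq]
  have hbdd : BddAbove (Set.range
      fun x : {x : Fin n → ℝ // ∑ u, x u = 0 ∧ ∑ u, x u ^ 2 = 1} => √(∑ u, (M *ᵥ x.1) u ^ 2)) := by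
    refine ⟨‖toEuclideanCLM (𝕜 := ℝ) M‖, ?_⟩
    rintro _ ⟨⟨x, -, hx⟩, rfl⟩
    have hop := (toEuclideanCLM (𝕜 := ℝ) M).le_opNorm (toLp 2 x)
    rwa [hnorm (toLp 2 x), hx, Real.sqrt_one, mul_one, hnorm] at hop
  have hunit : ∑ u, (‖y‖⁻¹ • y) u ^ 2 = 1 := by
    rw [← Real.sqrt_eq_one, ← hnorm, norm_smul, norm_inv, norm_norm,
      inv_mul_cancel₀ (norm_ne_zero_iff.2 hy0)]
  have hle : ‖toEuclideanCLM (𝕜 := ℝ) M (‖y‖⁻¹ • y)‖ ≤ lamMax M :=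
    (hnorm _).trans_le (le_ciSup hbdd ⟨‖y‖⁻¹ • y, by simp [← Finset.mul_sum, hy], hunit⟩)
  rwa [map_smul, norm_smul, norm_inv, norm_norm, inv_mul_le_iff₀ (norm_pos_iff.2 hy0),
    mul_comm] at hle

lemma norm_toEuclideanCLM_pow_le {M : Matrix (Fin n) (Fin n) ℝ} (hM : M ∈ colStochastic ℝ (Fin n))
    {y : EuclideanSpace ℝ (Fin n)} (hy : ∑ u, y u = 0) (k : ℕ) :
    ‖toEuclideanCLM (𝕜 := ℝ) (M ^ k) y‖ ≤ lamMax M ^ k * ‖y‖ := by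
  induction k with
  | zero => simp
  | succ k ih =>
    have hsum : ∑ u, toEuclideanCLM (𝕜 := ℝ) (M ^ k) y u = 0 := by
      rw [ofLp_toEuclideanCLM, sum_mulVec_of_mem_colStochastic (pow_mem hM k), hy]
    calc ‖toEuclideanCLM (𝕜 := ℝ) (M ^ (k + 1)) y‖
        = ‖toEuclideanCLM (𝕜 := ℝ) M (toEuclideanCLM (𝕜 := ℝ) (M ^ k) y)‖ := by
          rw [pow_succ', map_mul]; rfl
      _ ≤ lamMax M * (lamMax M ^ k * ‖y‖) := (norm_toEuclideanCLM_le M hsum).trans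
          (mul_le_mul_of_nonneg_left ih (lamMax_nonneg M))
      _ = lamMax M ^ (k + 1) * ‖y‖ := by ring

lemma abs_pow_apply_sub_le {M : Matrix (Fin n) (Fin n) ℝ} (hM : M ∈ colStochastic ℝ (Fin n))
    (k : ℕ) (u v w : Fin n) : |(M ^ k) u v - (M ^ k) u w| ≤ 2 * lamMax M ^ k := by
  have hlam : 0 ≤ lamMax M := lamMax_nonneg M
  let y : EuclideanSpace ℝ (Fin n) := EuclideanSpace.single v 1 - EuclideanSpace.single w 1
  have hy : ∑ i, y i = 0 := by simp [y]
  have hnorm : ‖y‖ ≤ 2 := (norm_sub_le _ _).trans (by simp [one_add_one_eq_two])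
  calc |(M ^ k) u v - (M ^ k) u w| = ‖toEuclideanCLM (𝕜 := ℝ) (M ^ k) y u‖ := by
        simp [y, Real.norm_eq_abs, -map_pow]
    _ ≤ ‖toEuclideanCLM (𝕜 := ℝ) (M ^ k) y‖ := PiLp.norm_apply_le _ u
    _ ≤ lamMax M ^ k * ‖y‖ := norm_toEuclideanCLM_pow_le hM hy k
    _ ≤ 2 * lamMax M ^ k := by
        rw [mul_comm]
        exact mul_le_mul_of_nonneg_right hnorm (by positivity)

lemma roundMatrix_mem_doublyStochastic (Ms : Fin d → Matching n) :
    roundMatrix Ms ∈ doublyStochastic ℝ (Fin n) :=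
  Submonoid.list_prod_mem _ <| List.forall_mem_ofFn_iff.2 fun i =>
    (Ms i).matrix_mem_doublyStochastic

lemma prodMatrix_circuit (hd : 0 < d) (Ms : Fin d → Matching n) (k : ℕ) :
    prodMatrix (circuit hd Ms) 1 (k * d) = roundMatrix Ms ^ k := by
  induction k with
  | zero => simp [prodMatrix]
  | succ k ih =>
    have hperiod : (List.range' (1 + k * d) d).map (fun s => (circuit hd Ms s).matrix)
        = List.ofFn fun i => (Ms i).matrix := by
      refine List.ext_getElem (by simp) fun i hi _ => ?_
      have hid : i < d := by simpa using hi
      have hindex : 1 + k * d + i - 1 = i + k * d := by omega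
      simp [circuit, hindex, Nat.mod_eq_of_lt hid]
    simp only [prodMatrix, Nat.add_sub_cancel] at ih ⊢
    rw [pow_succ, ← ih, roundMatrix, ← hperiod, Nat.succ_mul, ← List.range'_append_1,
      List.map_append, List.prod_append]

lemma exists_isSmoothing_circuit (hd : 0 < d) {Ms : Fin d → Matching n}
    (hlam : lamMax (roundMatrix Ms) < 1) (K : ℝ) {δ : ℝ} (hδ : 0 < δ) :
    ∃ t, IsSmoothing (circuit hd Ms) 0 t K δ := by
  have hlam0 : 0 ≤ lamMax (roundMatrix Ms) := lamMax_nonneg _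
  have hcol := (mem_doublyStochastic_iff_mem_rowStochastic_and_mem_colStochastic.1
    (roundMatrix_mem_doublyStochastic Ms)).2
  have htendsto : Filter.Tendsto (fun k => n * (2 * lamMax (roundMatrix Ms) ^ k) * K)
      Filter.atTop (nhds 0) := by
    simpa using (((tendsto_pow_atTop_nhds_zero_of_lt_one hlam0 hlam).const_mul 2).const_mul
      (n : ℝ)).mul_const K
  obtain ⟨k, hk⟩ := (htendsto.eventually_le_const hδ).exists
  refine ⟨k * d, fun ξ hξ => ?_⟩
  rw [zero_add, prodMatrix_circuit]
  calc disc (ξ ᵥ* roundMatrix Ms ^ k) ≤ n * (2 * lamMax (roundMatrix Ms) ^ k) * disc ξ :=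
        disc_vecMul_le (by positivity) (sum_col_of_mem_colStochastic (pow_mem hcol k))
          (abs_pow_apply_sub_le hcol k) ξ
    _ ≤ n * (2 * lamMax (roundMatrix Ms) ^ k) * K := by gcongr
    _ ≤ δ := hk

lemma isSmoothing_tauCont_circuit (hd : 0 < d) {Ms : Fin d → Matching n}
    (hlam : lamMax (roundMatrix Ms) < 1) (K : ℝ) {δ : ℝ} (hδ : 0 < δ) :
    IsSmoothing (circuit hd Ms) 0 (tauCont (circuit hd Ms) K δ) K δ :=
  Nat.sInf_mem (exists_isSmoothing_circuit hd hlam K hδ)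

end SpectralGap

section BlockProduct

variable {n : ℕ} {α : Type*} [CommMonoid α]

/-- The product of `F` over the block of `u` in the partition of the nodes into matched pairs and
unmatched singletons. So that every block is counted once, the product is recorded at the smaller
node of a pair, and the value at the larger node is `1`. -/
def Matching.blockProd (m : Matching n) (F : Fin n → α) (u : Fin n) : α :=
  if m.f u = u then F u else if u < m.f u then F u * F (m.f u) else 1

lemma Matching.prod_blockProd (m : Matching n) (F : Fin n → α) :
    ∏ u, m.blockProd F u = ∏ u, F u := by
  have hblock : ∀ u, m.blockProd F u =
      (if u ≤ m.f u then F u else 1) * if u < m.f u then F (m.f u) else 1 := fun u => by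
    rcases lt_trichotomy u (m.f u) with h | h | h
    · simp [Matching.blockProd, h, h.le, h.ne']
    · simp [Matching.blockProd, ← h]
    · simp [Matching.blockProd, h.ne, h.not_ge, h.not_gt]
  have hreindex : (∏ u, if u < m.f u then F (m.f u) else 1) = ∏ u, if m.f u < u then F u else 1 :=
    calc (∏ u, if u < m.f u then F (m.f u) else 1)
        = ∏ u, if m.f (m.f u) < m.f u then F (m.f u) else 1 := by simp only [m.invol]
      _ = ∏ u, if m.f u < u then F u else 1 :=
        Equiv.prod_comp (Function.Involutive.toPerm m.f m.invol)
          fun u => if m.f u < u then F u else 1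
  simp only [hblock, Finset.prod_mul_distrib, hreindex]
  rw [← Finset.prod_mul_distrib]
  refine Finset.prod_congr rfl fun u _ => ?_
  rcases le_or_gt u (m.f u) with h | h
  · simp [h, h.not_gt]
  · simp [h, h.not_ge]

end BlockProduct

section DiscreteProcess

variable {n : ℕ}

lemma step_of_eq {m : Matching n} {u : Fin n} (h : m.f u = u) (φ : Fin n → Fin n → Bool)
    (x : Fin n → ℤ) : step m φ x u = x u :=
  if_pos h

lemma step_of_lt {m : Matching n} {u : Fin n} (h : u < m.f u) (φ : Fin n → Fin n → Bool)
    (x : Fin n → ℤ) : step m φ x u =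
      if φ u (m.f u) then (x u + x (m.f u) + 1) / 2 else (x u + x (m.f u)) / 2 := by
  rw [step, if_neg h.ne', if_pos h]
  rfl

lemma step_partner_of_lt {m : Matching n} {u : Fin n} (h : u < m.f u) (φ : Fin n → Fin n → Bool)
    (x : Fin n → ℤ) : step m φ x (m.f u) =
      if φ u (m.f u) then (x u + x (m.f u)) / 2 else (x u + x (m.f u) + 1) / 2 := by
  rw [step, m.invol, if_neg h.ne, if_neg h.not_gt, add_comm (x (m.f u))]
  rfl

lemma step_nonneg (m : Matching n) (φ : Fin n → Fin n → Bool) {x : Fin n → ℤ}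
    (hx : ∀ u, 0 ≤ x u) (u : Fin n) : 0 ≤ step m φ x u := by
  have hceil : 0 ≤ Int.ediv (x u + x (m.f u) + 1) 2 :=
    Int.ediv_nonneg (by linarith [hx u, hx (m.f u)]) zero_le_two
  have hfloor : 0 ≤ Int.ediv (x u + x (m.f u)) 2 :=
    Int.ediv_nonneg (add_nonneg (hx _) (hx _)) zero_le_two
  unfold step
  split_ifs <;> first | assumption | exact hx u

lemma loads_succ (M : ℕ → Matching n) (Φ : ℕ → Fin n → Fin n → Bool) (x : Fin n → ℤ) (t : ℕ) :
    loads M Φ x (t + 1) = step (M (t + 1)) (Φ (t + 1)) (loads M Φ x t) := by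
  rw [loads, loadsFrom, zero_add]

lemma loads_nonneg (M : ℕ → Matching n) (Φ : ℕ → Fin n → Fin n → Bool) {x : Fin n → ℤ}
    (hx : ∀ u, 0 ≤ x u) (t : ℕ) (u : Fin n) : 0 ≤ loads M Φ x t u := by
  induction t generalizing u with
  | zero => exact hx u
  | succ t ih => exact loads_succ M Φ x t ▸ step_nonneg _ _ ih u

lemma loads_congr (M : ℕ → Matching n) {Φ Ψ : ℕ → Fin n → Fin n → Bool} (x : Fin n → ℤ) {t : ℕ}
    (h : ∀ s < t, Φ (s + 1) = Ψ (s + 1)) : loads M Φ x t = loads M Ψ x t := by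
  induction t with
  | zero => rfl
  | succ t ih =>
    rw [loads_succ, loads_succ, ih fun s hs => h s (hs.trans t.lt_succ_self), h t t.lt_succ_self]

lemma lift_succ {A : Type*} (a₀ : A) {T s : ℕ} (ω : Fin T → A) (hs : s < T) :
    lift a₀ ω (s + 1) = ω ⟨s, hs⟩ :=
  dif_pos hs

lemma loads_lift_snoc (M : ℕ → Matching n) (φ₀ : Fin n → Fin n → Bool) (x : Fin n → ℤ) {T : ℕ}
    (ω : Fin T → Fin n → Fin n → Bool) (φ : Fin n → Fin n → Bool) :
    loads M (lift φ₀ (Fin.snoc (α := fun _ => Fin n → Fin n → Bool) ω φ)) x (T + 1) =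
      step (M (T + 1)) φ (loads M (lift φ₀ ω) x T) := by
  rw [loads_succ, lift_succ φ₀ _ T.lt_succ_self]
  congr 1
  · exact Fin.snoc_last (α := fun _ => Fin n → Fin n → Bool) φ ω
  · refine loads_congr M x fun s hs => ?_
    rw [lift_succ φ₀ _ (hs.trans T.lt_succ_self), lift_succ φ₀ ω hs]
    exact Fin.snoc_castSucc (α := fun _ => Fin n → Fin n → Bool) φ ω ⟨s, hs⟩

end DiscreteProcess

section GeneratingFunction

variable {n : ℕ} {g : Fin n → ℝ} {x : Fin n → ℤ}

lemma half_zpow_ceil_mul_zpow_floor_add_le {a b : ℝ} (ha : 0 < a) (hb : 0 < b) {s : ℤ}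
    (hs : 0 ≤ s) :
    (a ^ ((s + 1) / 2) * b ^ (s / 2) + a ^ (s / 2) * b ^ ((s + 1) / 2)) / 2 ≤
      ((a + b) / 2) ^ s := by
  have hamgm : a * b ≤ ((a + b) / 2) ^ (2 : ℤ) := by
    norm_cast
    nlinarith [sq_nonneg (a - b)]
  have hpow {k : ℤ} (hk : 0 ≤ k) : a ^ k * b ^ k ≤ ((a + b) / 2) ^ (2 * k) := by
    rw [← mul_zpow, zpow_mul]
    exact zpow_le_zpow_left₀ hk (mul_pos ha hb).le hamgm
  obtain ⟨k, rfl | rfl⟩ := s.even_or_odd'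
  · rw [show (2 * k + 1) / 2 = k by omega, show 2 * k / 2 = k by omega, add_self_div_two]
    exact hpow (by omega)
  · rw [show (2 * k + 1 + 1) / 2 = k + 1 by omega, show (2 * k + 1) / 2 = k by omega,
      zpow_add_one₀ ha.ne', zpow_add_one₀ hb.ne', zpow_add_one₀ (by positivity)]
    calc (a ^ k * a * b ^ k + a ^ k * (b ^ k * b)) / 2 = a ^ k * b ^ k * ((a + b) / 2) := by ring
      _ ≤ ((a + b) / 2) ^ (2 * k) * ((a + b) / 2) :=
        mul_le_mul_of_nonneg_right (hpow (by omega)) (by positivity)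

lemma blockProd_step {α : Type*} [CommMonoid α] (m : Matching n) (φ : Fin n → Fin n → Bool)
    (x : Fin n → ℤ) (F : Fin n → ℤ → α) (u : Fin n) :
    m.blockProd (fun w => F w (step m φ x w)) u =
      m.blockProd (fun w => F w (step m (fun _ _ => φ u (m.f u)) x w)) u := by
  rcases lt_trichotomy u (m.f u) with h | h | h
  · simp only [Matching.blockProd, step_of_lt h, step_partner_of_lt h]
  · simp only [Matching.blockProd, if_pos h.symm, step_of_eq h.symm]
  · simp only [Matching.blockProd, if_neg h.ne, if_neg h.not_gt]

lemma ex_blockProd_step_le (m : Matching n) (hg : ∀ u, 0 < g u) (hx : ∀ u, 0 ≤ x u) (u : Fin n) :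
    ex (fun b : Bool => m.blockProd (fun w => g w ^ step m (fun _ _ => b) x w) u) ≤
      m.blockProd (fun w => (m.matrix *ᵥ g) w ^ x w) u := by
  rcases lt_trichotomy u (m.f u) with h | h | h
  · have hpos : 0 < (g u + g (m.f u)) / 2 := half_pos (add_pos (hg _) (hg _))
    simp only [Matching.blockProd, if_neg h.ne', if_pos h, step_of_lt h, step_partner_of_lt h,
      m.matrix_mulVec_apply, m.invol, add_comm (g (m.f u)), ← zpow_add₀ hpos.ne']
    simpa [ex] using
      half_zpow_ceil_mul_zpow_floor_add_le (hg u) (hg (m.f u)) (add_nonneg (hx u) (hx (m.f u)))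
  · simp only [Matching.blockProd, step_of_eq h.symm, m.matrix_mulVec_apply, ← h,
      add_self_div_two, ex_const, le_refl]
  · simp only [Matching.blockProd, if_neg h.ne, if_neg h.not_gt, ex_const, le_refl]

lemma ex_prod_zpow_step_le (m : Matching n) (hg : ∀ u, 0 < g u) (hx : ∀ u, 0 ≤ x u) :
    ex (fun φ : Fin n → Fin n → Bool => ∏ u, g u ^ step m φ x u) ≤
      ∏ u, (m.matrix *ᵥ g) u ^ x u := by
  set H : Fin n → Bool → ℝ := fun u b =>
    m.blockProd (fun w => g w ^ step m (fun _ _ => b) x w) u with hH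
  have hHnonneg : ∀ u b, 0 ≤ H u b := fun u b => by
    have := hg u
    have := hg (m.f u)
    simp only [hH, Matching.blockProd]
    positivity
  calc ex (fun φ : Fin n → Fin n → Bool => ∏ u, g u ^ step m φ x u)
      = ex (fun φ : Fin n → Fin n → Bool => ∏ u, H u (φ u (m.f u))) := by
        congr with φ
        rw [← m.prod_blockProd]
        exact Finset.prod_congr rfl fun u _ => blockProd_step m φ x (fun w k => g w ^ k) u
    _ = ∏ u, ex (H u) := by
        rw [ex_prod_pi fun u (r : Fin n → Bool) => H u (r (m.f u))]
        simp only [ex_eval]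
    _ ≤ ∏ u, m.blockProd (fun w => (m.matrix *ᵥ g) w ^ x w) u :=
        Finset.prod_le_prod (fun u _ => ex_nonneg (hHnonneg u))
          fun u _ => ex_blockProd_step_le m hg hx u
    _ = ∏ u, (m.matrix *ᵥ g) u ^ x u := m.prod_blockProd _

lemma ex_prod_zpow_loads_le (M : ℕ → Matching n) (φ₀ : Fin n → Fin n → Bool)
    (hg : ∀ u, 0 < g u) (hx : ∀ u, 0 ≤ x u) (T : ℕ) :
    ex (fun ω : Fin T → Fin n → Fin n → Bool => ∏ u, g u ^ loads M (lift φ₀ ω) x T u) ≤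
      ∏ u, (prodMatrix M 1 T *ᵥ g) u ^ x u := by
  induction T generalizing g with
  | zero => simp [prodMatrix, loads, loadsFrom, ex_const]
  | succ T ih =>
    simp only [ex_snoc, loads_lift_snoc]
    rw [prodMatrix_one_succ, ← Matrix.mulVec_mulVec]
    exact (ex_mono fun ω => ex_prod_zpow_step_le (M (T + 1)) hg (loads_nonneg M _ hx T)).trans
      (ih ((M (T + 1)).matrix_mulVec_pos hg))

lemma ex_zpow_loads_le (M : ℕ → Matching n) (φ₀ : Fin n → Fin n → Bool) (hx : ∀ u, 0 ≤ x u)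
    {T : ℕ} {z B : ℝ} (hz : 1 ≤ z) {v : Fin n} (hB : ∀ u, prodMatrix M 1 T u v ≤ B) :
    ex (fun ω : Fin T → Fin n → Fin n → Bool => z ^ loads M (lift φ₀ ω) x T v) ≤
      Real.exp ((z - 1) * B * ∑ u, (x u : ℝ)) := by
  have hP := prodMatrix_mem_doublyStochastic M 1 T
  set g : Fin n → ℝ := 1 + Pi.single v (z - 1) with hgdef
  have hsingle : (0 : Fin n → ℝ) ≤ Pi.single v (z - 1) := Pi.single_nonneg.2 (sub_nonneg.2 hz)
  have hg : ∀ u, 0 < g u := fun u => add_pos_of_pos_of_nonneg one_pos (hsingle u)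
  have hprod : ∀ y : Fin n → ℤ, ∏ u, g u ^ y u = z ^ y v := fun y => by
    rw [Finset.prod_eq_single v (fun u _ hu => by simp [g, hu]) (by simp)]
    simp [g]
  have hPg : ∀ u, (prodMatrix M 1 T *ᵥ g) u = 1 + (z - 1) * prodMatrix M 1 T u v := fun u => by
    rw [hgdef, Matrix.mulVec_add, mulVec_one_of_mem_doublyStochastic hP]
    simp [mul_comm]
  have hPg_nonneg : ∀ u, 0 ≤ (prodMatrix M 1 T *ᵥ g) u := fun u => by
    rw [hPg]
    exact add_nonneg zero_le_one
      (mul_nonneg (sub_nonneg.2 hz) (nonneg_of_mem_doublyStochastic hP))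
  have hPg_le : ∀ u, (prodMatrix M 1 T *ᵥ g) u ≤ Real.exp ((z - 1) * B) := fun u => by
    rw [hPg, add_comm]
    exact (add_le_add_left (mul_le_mul_of_nonneg_left (hB u) (sub_nonneg.2 hz)) 1).trans
      (Real.add_one_le_exp _)
  calc ex (fun ω : Fin T → Fin n → Fin n → Bool => z ^ loads M (lift φ₀ ω) x T v)
      ≤ ∏ u, (prodMatrix M 1 T *ᵥ g) u ^ x u := by
        simpa only [hprod] using ex_prod_zpow_loads_le M φ₀ hg hx T
    _ ≤ ∏ u, Real.exp ((z - 1) * B) ^ x u :=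
        Finset.prod_le_prod (fun u _ => zpow_nonneg (hPg_nonneg u) _)
          fun u _ => zpow_le_zpow_left₀ (hx u) (hPg_nonneg u) (hPg_le u)
    _ = Real.exp ((z - 1) * B * ∑ u, (x u : ℝ)) := by
        simp only [Finset.mul_sum, Real.exp_sum, ← Real.rpow_intCast, ← Real.exp_mul]

end GeneratingFunction

section TailBound

variable {n : ℕ} {M : ℕ → Matching n} {T : ℕ} {x : Fin n → ℤ} {ε : ℝ}

lemma pr_lt_loads_le (φ₀ : Fin n → Fin n → Bool) (hT : IsSmoothing M 0 T 1 (n : ℝ)⁻¹)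
    (hx : ∀ u, 0 ≤ x u) (hε : 0 < ε) (hsum : ∑ u, (x u : ℝ) ≤ (n : ℝ) ^ (1 - ε)) (a : ℝ)
    (v : Fin n) :
    pr (fun ω : Fin T → Fin n → Fin n → Bool => a / ε < loads M (lift φ₀ ω) x T v) ≤
      Real.exp 2 / (n : ℝ) ^ a := by
  have hn : (0 : ℝ) < n := Nat.cast_pos.2 v.pos
  have hn1 : (1 : ℝ) ≤ n := Nat.one_le_cast.2 v.pos
  have hz : 1 ≤ (n : ℝ) ^ ε := Real.one_le_rpow hn1 hε.le
  have hentry : ∀ u, prodMatrix M 1 T u v ≤ 2 / n := fun u =>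
    (prodMatrix_le_of_isSmoothing hT u v).trans_eq (by ring)
  have hexponent : ((n : ℝ) ^ ε - 1) * (2 / n) * ∑ u, (x u : ℝ) ≤ 2 := calc
    ((n : ℝ) ^ ε - 1) * (2 / n) * ∑ u, (x u : ℝ) ≤ (n : ℝ) ^ ε * (2 / n) * (n : ℝ) ^ (1 - ε) := by
      gcongr
      · exact Finset.sum_nonneg fun u _ => Int.cast_nonneg (hx u)
      · exact sub_le_self _ zero_le_one
    _ = 2 / n * (n : ℝ) ^ (ε + (1 - ε)) := by rw [Real.rpow_add hn]; ring
    _ = 2 := by rw [add_sub_cancel, Real.rpow_one, div_mul_cancel₀ _ hn.ne']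
  refine (pr_le_ex_div (Real.rpow_pos_of_pos hn a) (fun ω => by positivity) fun ω hω => ?_).trans
    (div_le_div_of_nonneg_right ((ex_zpow_loads_le M φ₀ hx hz hentry).trans
      (Real.exp_le_exp.2 hexponent)) (by positivity))
  rw [← Real.rpow_mul_intCast hn.le]
  exact Real.rpow_le_rpow_of_exponent_le hn1 ((div_lt_iff₀' hε).1 hω).le

lemma one_sub_le_pr_discZ_loads_le (φ₀ : Fin n → Fin n → Bool)
    (hT : IsSmoothing M 0 T 1 (n : ℝ)⁻¹) (hx : ∀ u, 0 ≤ x u) (hε : 0 < ε)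
    (hsum : ∑ u, (x u : ℝ) ≤ (n : ℝ) ^ (1 - ε)) {a : ℝ} (ha : 0 ≤ a) :
    1 - n * (Real.exp 2 / (n : ℝ) ^ a) ≤
      pr (fun ω : Fin T → Fin n → Fin n → Bool => discZ (loads M (lift φ₀ ω) x T) ≤ a / ε) := by
  have hunion : pr (fun ω : Fin T → Fin n → Fin n → Bool =>
      ∃ v, a / ε < loads M (lift φ₀ ω) x T v) ≤ n * (Real.exp 2 / (n : ℝ) ^ a) := by
    refine (pr_exists_le _).trans
      ((Finset.sum_le_sum fun v _ => pr_lt_loads_le φ₀ hT hx hε hsum a v).trans_eq ?_)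
    rw [Finset.sum_const, Finset.card_univ, Fintype.card_fin, nsmul_eq_mul]
  refine (sub_le_sub_left hunion 1).trans ((one_sub_pr _).trans_le (pr_mono fun ω hω => ?_))
  push Not at hω
  exact disc_le_of_mem_Icc (by positivity) fun u =>
    ⟨Int.cast_nonneg (loads_nonneg M _ hx T u), hω u⟩

end TailBound

lemma mul_exp_two_div_rpow_nine_le {y : ℝ} (hy : 2 ≤ y) :
    y * (Real.exp 2 / y ^ (9 : ℝ)) ≤ 2 / y := by
  have hexp : Real.exp 2 ≤ 8 := by
    rw [← one_add_one_eq_two, Real.exp_add]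
    nlinarith [Real.exp_one_lt_d9, Real.exp_pos 1]
  have hpow : (2 : ℝ) ^ 7 ≤ y ^ 7 := by gcongr
  have hy0 : 0 < y := two_pos.trans_le hy
  rw [Real.rpow_ofNat, mul_div_assoc', div_le_div_iff₀ (by positivity) hy0]
  nlinarith [mul_le_mul_of_nonneg_left (hexp.trans (by linarith : (8 : ℝ) ≤ 2 * y ^ 7))
    (sq_nonneg y)]

theorem stmt14_general {n : ℕ} (hn : 2 ≤ n) {ε : ℝ} (hε : 0 < ε) {M : ℕ → Matching n} {T : ℕ}
    (hT : IsSmoothing M 0 T 1 (n : ℝ)⁻¹) {x : Fin n → ℤ} (hx : ∀ u, 0 ≤ x u)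
    (hsum : ∑ u, (x u : ℝ) ≤ (n : ℝ) ^ (1 - ε)) :
    1 - 2 / (n : ℝ) ≤ pr (fun ω : Fin T → Fin n → Fin n → Bool =>
      discZ (loads M (lift (orientDefault n) ω) x T) ≤ 9 / ε) :=
  (sub_le_sub_left (mul_exp_two_div_rpow_nine_le (Nat.ofNat_le_cast.2 hn)) 1).trans
    (one_sub_le_pr_discZ_loads_le _ hT hx hε hsum (by norm_num))

/-- Balancing circuit model: for any constant `ε > 0` and all
sufficiently large `n`, starting from a non-negative load vector with at most
`n^{1-ε}` tokens, after `τ_cont(1, n⁻¹)` rounds of the discrete process the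
discrepancy is at most `9/ε` with probability at least `1 - 2/n`. -/
theorem stmt14 (ε : ℝ) (hε : 0 < ε) :
    ∃ N₀ : ℕ, ∀ n : ℕ, N₀ ≤ n →
    ∀ d : ℕ, ∀ hd : 0 < d, ∀ Ms : Fin d → Matching n,
    lamMax (roundMatrix Ms) < 1 →
    ∀ x : Fin n → ℤ, (∀ u, 0 ≤ x u) →
    (∑ u, (x u : ℝ)) ≤ (n : ℝ) ^ (1 - ε) →
    1 - 2 / (n : ℝ) ≤
      pr (fun ω : Fin (tauCont (circuit hd Ms) 1 ((n : ℝ)⁻¹)) → Fin n → Fin n → Bool =>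
        discZ (loads (circuit hd Ms) (lift (orientDefault n) ω) x
            (tauCont (circuit hd Ms) 1 ((n : ℝ)⁻¹)))
          ≤ 9 / ε) :=
  ⟨2, fun _ hn _ hd _ hlam _ hx hsum => stmt14_general hn hε
    (isSmoothing_tauCont_circuit hd hlam 1 (by positivity)) hx hsum⟩

end LB
end
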